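/- arXiv:2003.05876 — 4 statements merged into one kernel-verified Lean document; each statement's English description precedes it below -/
import Mathlib

section
/- For every integer N ≥ 1, the matrix identity H_BH(1)·Q_BH = Q_BH·J holds, i.e. the transition matrix Q_BH intertwines the exceptional-point Bose–Hubbard Hamiltonian H_BH(1) with the nilpotent Jordan block J. -/
/-!
Write `N = n + 1` and `s k = √(binom(n,k))`. The couplings satisfy
`g k * s (k+1) = (n-k) * s k` and `g k * s k = (k+1) * s (k+1)`, so conjugation by `D` turns
`H_BH(1)` into a tridiagonal matrix with integer entries (times `i`). With `a = n - k`, the entry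
`(k, q)` of the identity then reduces to
`(a - k) * binom(a,q) - a * binom(a-1,q) + k * binom(a+1,q) = (n-q+1) * binom(a,q-1)`,
which follows from Pascal's rule and `q * binom(a,q) = (a-q+1) * binom(a,q-1)`
(`pascal_three_term`); the remaining scalar `-i (n-q+1)` raises `G q q` to
`G (q-1) (q-1)`.
-/

open Matrix Polynomial Finset

/-- off-diagonal coupling `√((N−1−k)(k+1))`. -/
noncomputable def gCoup (N k : ℕ) : ℝ := Real.sqrt (((N - 1 - k) * (k + 1) : ℕ))

/-- the non-Hermitian Bose–Hubbard Hamiltonian `H_BH(z)`. -/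
noncomputable def HBH (N : ℕ) (z : ℂ) : Matrix (Fin N) (Fin N) ℂ :=
  fun k l =>
    if (k : ℕ) = (l : ℕ) then -Complex.I * (((N : ℤ) - 1 - 2 * (k : ℕ) : ℤ) : ℂ) * z
    else if (l : ℕ) = (k : ℕ) + 1 then (gCoup N k : ℂ)
    else if (k : ℕ) = (l : ℕ) + 1 then (gCoup N l : ℂ)
    else 0

/-- the EP limit of the discrete anharmonic-oscillator Hamiltonian `H_AO`. -/
noncomputable def HAO (N : ℕ) : Matrix (Fin N) (Fin N) ℂ :=
  fun k l =>
    if (k : ℕ) = (l : ℕ) then -(((N : ℤ) - 1 - 2 * (k : ℕ) : ℤ) : ℂ)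
    else if (l : ℕ) = (k : ℕ) + 1 then (gCoup N k : ℂ)
    else if (k : ℕ) = (l : ℕ) + 1 then -(gCoup N l : ℂ)
    else 0

/-- the nilpotent Jordan block `J`. -/
noncomputable def Jmat (N : ℕ) : Matrix (Fin N) (Fin N) ℂ :=
  fun k l => if (l : ℕ) = (k : ℕ) + 1 then 1 else 0

/-- the Pascal-triangle matrix `P`. -/
noncomputable def Pmat (N : ℕ) : Matrix (Fin N) (Fin N) ℂ :=
  fun m q => ((N - 1 - (m : ℕ)).choose (q : ℕ) : ℂ)

/-- the diagonal factor `D` with `D_{k,k} = i^k·√(binom(N−1,k))`. -/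
noncomputable def Dmat (N : ℕ) : Matrix (Fin N) (Fin N) ℂ :=
  Matrix.diagonal fun k => Complex.I ^ (k : ℕ) * (Real.sqrt ((N - 1).choose (k : ℕ)) : ℂ)

/-- the diagonal factor `G` with `G_{k,k} = (−i)^{N−1−k}·(N−1−k)!`. -/
noncomputable def Gmat (N : ℕ) : Matrix (Fin N) (Fin N) ℂ :=
  Matrix.diagonal fun k => (-Complex.I) ^ (N - 1 - (k : ℕ)) * ((N - 1 - (k : ℕ)).factorial : ℂ)

/-- the Bose–Hubbard transition matrix `Q_BH = D·P·G`. -/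
noncomputable def QBH (N : ℕ) : Matrix (Fin N) (Fin N) ℂ := Dmat N * Pmat N * Gmat N

/-- the diagonal factor `C` with `C_{k,k} = √(binom(N−1,k))`. -/
noncomputable def Cmat (N : ℕ) : Matrix (Fin N) (Fin N) ℂ :=
  Matrix.diagonal fun k => (Real.sqrt ((N - 1).choose (k : ℕ)) : ℂ)

/-- the diagonal factor `F` with `F_{k,k} = (−1)^{N−1−k}·(N−1−k)!`. -/
noncomputable def Fmat (N : ℕ) : Matrix (Fin N) (Fin N) ℂ :=
  Matrix.diagonal fun k => (-1 : ℂ) ^ (N - 1 - (k : ℕ)) * ((N - 1 - (k : ℕ)).factorial : ℂ)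

/-- the anharmonic-oscillator transition matrix `Q_AO = C·P·F`. -/
noncomputable def QAO (N : ℕ) : Matrix (Fin N) (Fin N) ℂ := Cmat N * Pmat N * Fmat N

/-- `β = −1 + i`. -/
noncomputable def betaC : ℂ := -1 + Complex.I

/-- the diagonal factor `B` with `B_{k,k} = (−β)^{−k}`. -/
noncomputable def Bmat (N : ℕ) : Matrix (Fin N) (Fin N) ℂ :=
  Matrix.diagonal fun k => ((-betaC) ^ (k : ℕ))⁻¹

/-- the diagonal factor `A` with `A_{k,k} = β^k`. -/
noncomputable def Amat (N : ℕ) : Matrix (Fin N) (Fin N) ℂ :=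
  Matrix.diagonal fun k => betaC ^ (k : ℕ)

/-- the upper-triangular real matrix `R` with
`R_{n,n+q} = √(binom(n+q,n)·binom(N−1−n,q))`. -/
noncomputable def Rmat (N : ℕ) : Matrix (Fin N) (Fin N) ℂ :=
  fun n k =>
    if (n : ℕ) ≤ (k : ℕ) then
      (Real.sqrt (((k : ℕ).choose (n : ℕ)) * ((N - 1 - (n : ℕ)).choose ((k : ℕ) - (n : ℕ)))) : ℂ)
    else 0

/-- the transition-matrix product `S = B·R·A`. -/
noncomputable def Smat (N : ℕ) : Matrix (Fin N) (Fin N) ℂ := Bmat N * Rmat N * Amat N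

/-- the discrete anharmonic-oscillator Hamiltonian `H_AO(γ)` with coupling parameter `γ`. -/
noncomputable def HAOg (N : ℕ) (γ : ℝ) : Matrix (Fin N) (Fin N) ℝ :=
  fun k l =>
    if (k : ℕ) = (l : ℕ) then -((N : ℝ) - 1 - 2 * (k : ℕ))
    else if (l : ℕ) = (k : ℕ) + 1 then
      Real.sqrt ((((N - 1 - (k : ℕ)) * ((k : ℕ) + 1) : ℕ)) * (1 - γ))
    else if (k : ℕ) = (l : ℕ) + 1 then
      -Real.sqrt ((((N - 1 - (l : ℕ)) * ((l : ℕ) + 1) : ℕ)) * (1 - γ))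
    else 0

/-- the exchange (parity) matrix `Π`. -/
noncomputable def PiMat (N : ℕ) : Matrix (Fin N) (Fin N) ℂ :=
  fun k l => if (k : ℕ) + (l : ℕ) = N - 1 then 1 else 0

/-- The action of the tridiagonal matrix `H_BH(1)` on a vector. The boundary term at
`k = n` is harmless because `gCoup (n+1) n = 0`. -/
lemma sum_HBH_mul (n : ℕ) (k : Fin (n + 1)) (f : ℕ → ℂ) :
    ∑ l : Fin (n + 1), HBH (n + 1) 1 k l * f l
      = -Complex.I * ((n : ℂ) - 2 * (k : ℕ)) * f k + gCoup (n + 1) k * f (k + 1)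
        + (if (k : ℕ) = 0 then 0 else (gCoup (n + 1) (k - 1) : ℂ) * f (k - 1)) := by
  obtain ⟨k, hk⟩ := k
  have h : ∀ l : Fin (n + 1), HBH (n + 1) 1 ⟨k, hk⟩ l * f l =
      (fun l : ℕ => (if l = k then -Complex.I * ((n : ℂ) - 2 * (k : ℕ)) * f k else 0)
        + (if l = k + 1 then gCoup (n + 1) k * f (k + 1) else 0)
        + (if l = k - 1 then
            (if k = 0 then 0 else (gCoup (n + 1) (k - 1) : ℂ) * f (k - 1)) else 0)) l := by
    rintro ⟨l, hl⟩
    simp only [HBH]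
    rcases eq_or_ne k l with rfl | h1
    · by_cases h0 : k = 0
      · subst h0; simp
      · have h2 : k ≠ k - 1 := by omega
        simp [h2]
    · by_cases h2 : l = k + 1
      · subst h2
        have h3 : k + 1 ≠ k - 1 := by omega
        simp [h3]
      · by_cases h3 : k = l + 1
        · subst h3
          have h4 : l ≠ l + 1 + 1 := by omega
          simp [h4]
        · by_cases h4 : l = k - 1
          · omega
          · simp [h1, h1.symm, h2, h3, h4]
  rw [Finset.sum_congr rfl fun l _ => h l, Fin.sum_univ_eq_sum_range (fun l : ℕ =>
    (if l = k then -Complex.I * ((n : ℂ) - 2 * (k : ℕ)) * f k else 0)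
      + (if l = k + 1 then gCoup (n + 1) k * f (k + 1) else 0)
      + (if l = k - 1 then
          (if k = 0 then 0 else (gCoup (n + 1) (k - 1) : ℂ) * f (k - 1)) else 0)), Finset.sum_add_distrib,
    Finset.sum_add_distrib, Finset.sum_ite_eq', Finset.sum_ite_eq', Finset.sum_ite_eq']
  have h5 : k - 1 < n + 1 := by omega
  by_cases h6 : k + 1 < n + 1
  · simp [hk, h5, h6]
  · have : k = n := by omega
    subst this
    simp [gCoup, h5]

lemma gCoup_mul_sqrt_succ (n k : ℕ) :
    gCoup (n + 1) k * √(n.choose (k + 1)) = ((n - k : ℕ) : ℝ) * √(n.choose k) := by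
  have h := Nat.choose_succ_right_eq n k
  rw [gCoup, ← Real.sqrt_mul (by positivity), ← Real.sqrt_sq (Nat.cast_nonneg (n - k)),
    ← Real.sqrt_mul (by positivity)]
  congr 1
  norm_cast
  rw [Nat.add_sub_cancel]
  linear_combination (n - k) * h

lemma gCoup_mul_sqrt (n k : ℕ) :
    gCoup (n + 1) k * √(n.choose k) = ((k + 1 : ℕ) : ℝ) * √(n.choose (k + 1)) := by
  have h := Nat.choose_succ_right_eq n k
  rw [gCoup, ← Real.sqrt_mul (by positivity), ← Real.sqrt_sq (Nat.cast_nonneg (k + 1)),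
    ← Real.sqrt_mul (by positivity)]
  congr 1
  norm_cast
  rw [Nat.add_sub_cancel]
  zify at h ⊢
  linear_combination -(k + 1 : ℤ) * h

/-- The contiguous relation for Pascal's triangle behind the intertwining, with
`a` and `k` independent and column index `q + 1`. -/
lemma pascal_three_term (a k q : ℕ) :
    ((a : ℂ) - k) * a.choose (q + 1) - a * (a - 1).choose (q + 1) + k * (a + 1).choose (q + 1)
      = ((a : ℂ) + k - q) * a.choose q := by
  have h1 : ((a + 1).choose (q + 1) : ℂ) = a.choose q + a.choose (q + 1) := by
    exact_mod_cast Nat.choose_succ_succ a q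
  rw [h1]
  rcases a with _ | b
  · rcases q with _ | q <;> simp
  · have h2 : ((b + 1).choose (q + 1) : ℂ) = b.choose q + b.choose (q + 1) := by
      exact_mod_cast Nat.choose_succ_succ b q
    have h3 : ((b : ℂ) + 1) * b.choose q = (b + 1).choose (q + 1) * (q + 1) := by
      exact_mod_cast Nat.add_one_mul_choose_eq b q
    have h4 : ((b + 1).choose (q + 1) : ℂ) * (q + 1) = (b + 1).choose q * ((b : ℂ) + 1 - q) := by
      rcases le_or_gt q (b + 1) with hq | hq
      · have := Nat.choose_succ_right_eq (b + 1) q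
        have := congrArg (Nat.cast : ℕ → ℂ) this
        push_cast [Nat.cast_sub hq] at this
        exact this
      · simp [Nat.choose_eq_zero_of_lt hq, Nat.choose_eq_zero_of_lt (hq.trans (Nat.lt_succ_self q))]
    push_cast
    linear_combination ((b : ℂ) + 1) * h2 + h3 + h4

/-- Row `k` of `H_BH(1) * D` applied to a vector `p`, with the square roots cleared: only `D k k`
remains. For `k = 0` the truncated `p (k - 1)` on the right has coefficient `0`. -/
lemma row_reduce (n k : ℕ) (hk : k ≤ n) (p : ℕ → ℂ) :
    -Complex.I * ((n : ℂ) - 2 * k) * (Complex.I ^ k * (√(n.choose k) : ℝ) * p k)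
      + gCoup (n + 1) k * (Complex.I ^ (k + 1) * (√(n.choose (k + 1)) : ℝ) * p (k + 1))
      + (if k = 0 then 0 else (gCoup (n + 1) (k - 1) : ℂ)
          * (Complex.I ^ (k - 1) * (√(n.choose (k - 1)) : ℝ) * p (k - 1)))
    = -Complex.I * (Complex.I ^ k * (√(n.choose k) : ℝ)) *
        ((((n - k : ℕ) : ℂ) - k) * p k - ((n - k : ℕ) : ℂ) * p (k + 1) + k * p (k - 1)) := by
  have h1 : (gCoup (n + 1) k : ℂ) * (√(n.choose (k + 1)) : ℝ)
      = ((n - k : ℕ) : ℂ) * (√(n.choose k) : ℝ) := by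
    exact_mod_cast gCoup_mul_sqrt_succ n k
  rcases k with _ | k
  · simp only [if_true]
    push_cast at h1 ⊢
    linear_combination Complex.I ^ (0 + 1) * p (0 + 1) * h1
  · have h2 : (gCoup (n + 1) k : ℂ) * (√(n.choose k) : ℝ)
        = ((k + 1 : ℕ) : ℂ) * (√(n.choose (k + 1)) : ℝ) := by
      exact_mod_cast gCoup_mul_sqrt n k
    have hI : Complex.I ^ 2 = -1 := Complex.I_sq
    simp only [Nat.add_sub_cancel, Nat.add_eq_zero_iff, one_ne_zero, and_false, if_false]
    push_cast [Nat.cast_sub hk] at h1 h2 ⊢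
    linear_combination Complex.I ^ (k + 2) * p (k + 2) * h1 + Complex.I ^ k * p k * h2
      + Complex.I ^ k * (k + 1) * (√(n.choose (k + 1)) : ℝ) * p k * hI

lemma QBH_apply (n : ℕ) (k q : Fin (n + 1)) :
    QBH (n + 1) k q = Complex.I ^ (k : ℕ) * (√(n.choose k) : ℝ) * ((n - k : ℕ).choose q : ℂ)
      * ((-Complex.I) ^ (n - q : ℕ) * ((n - q : ℕ).factorial : ℂ)) := by
  simp [QBH, Dmat, Pmat, Gmat]

/-- `H_BH(1)·Q_BH = Q_BH·J`. -/
theorem bh_intertwining (N : ℕ) (hN : 1 ≤ N) :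
    HBH N 1 * QBH N = QBH N * Jmat N := by
  obtain ⟨n, rfl⟩ : ∃ n, N = n + 1 := ⟨N - 1, by omega⟩
  ext k q
  have hk : (k : ℕ) ≤ n := Nat.lt_succ_iff.mp k.2
  -- `n - (k - 1)` is replaced by `n - k + 1`; for `k = 0` these differ because of truncated
  -- subtraction, but the coefficient `k` vanishes.
  have hL : (HBH (n + 1) 1 * QBH (n + 1)) k q
      = -Complex.I * (Complex.I ^ (k : ℕ) * (√(n.choose k) : ℝ)) *
        ((((n - k : ℕ) : ℂ) - (k : ℕ)) * (n - k : ℕ).choose q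
          - ((n - k : ℕ) : ℂ) * (n - k - 1 : ℕ).choose q
          + (k : ℕ) * (n - k + 1 : ℕ).choose q)
        * ((-Complex.I) ^ (n - q : ℕ) * ((n - q : ℕ).factorial : ℂ)) := by
    rw [Matrix.mul_apply]
    simp only [QBH_apply, ← mul_assoc]
    simp only [mul_assoc _ ((-Complex.I) ^ (n - q : ℕ)), ← Finset.sum_mul]
    congr 1
    have h := sum_HBH_mul n k
      (fun l => Complex.I ^ l * (√(n.choose l) : ℝ) * ((n - l : ℕ).choose q : ℂ))
    simp only [← mul_assoc] at h
    rw [h]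
    have h' := row_reduce n k hk (fun l => ((n - l : ℕ).choose q : ℂ))
    simp only [← mul_assoc] at h' ⊢
    rw [h']
    rw [show n - ((k : ℕ) + 1) = n - k - 1 by omega]
    rcases Nat.eq_zero_or_pos (k : ℕ) with h0 | h0
    · simp [h0]
    · rw [show n - ((k : ℕ) - 1) = n - k + 1 by omega]
  rw [hL, Matrix.mul_apply]
  obtain ⟨q, hq⟩ := q
  rcases q with _ | q
  · simp [Jmat]
  · have hR : ∑ j, QBH (n + 1) k j * Jmat (n + 1) j ⟨q + 1, hq⟩
        = QBH (n + 1) k ⟨q, by omega⟩ := by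
      rw [Finset.sum_eq_single ⟨q, by omega⟩]
      · simp [Jmat]
      · rintro ⟨j, hj⟩ - hne
        have : q ≠ j := fun h => hne (by simp [h])
        simp [Jmat, this]
      · simp
    rw [hR, QBH_apply]
    simp only
    rw [pascal_three_term, show n - q = (n - (q + 1)) + 1 by omega, Nat.factorial_succ, pow_succ]
    have h1 : ((n - (q + 1) : ℕ) : ℂ) = n - (q + 1) := by
      rw [Nat.cast_sub (by omega)]; push_cast; ring
    push_cast [Nat.cast_sub hk]
    rw [h1]
    ring
end

section
/- For every integer N ≥ 1, the matrix identity H_AO·Q_AO = Q_AO·J holds, i.e. the transition matrix Q_AO intertwines the exceptional-point anharmonic-oscillator Hamiltonian H_AO with the nilpotent Jordan block J. -/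
/-!
Write `M = N - 1`, `c k = √(binom(M,k))` and `g k = √((M-k)(k+1))`. The factor `C` absorbs the
square roots of the Hamiltonian, since `g k * c (k+1) = (M-k) * c k` and
`g k * c k = (k+1) * c (k+1)` (`gCoup_mul_sqrt_choose_succ`, `gCoup_mul_sqrt_choose`). Entry
`(m, q)` of the claimed identity, divided by `c m`, becomes a relation between binomial
coefficients; with `a = M - m` it reads
`(m - a) binom(a,q) + a binom(a-1,q) - m binom(a+1,q) = -(M-q+1) binom(a,q-1)`,
the right-hand side being `0` for `q = 0` (`pascal_identity_zero`, `pascal_identity_succ`). The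
factor `-(M-q+1)` is the ratio of consecutive diagonal entries of `F`.
-/

open Matrix Polynomial Finset

theorem gCoup_mul_sqrt_choose_succ (M k : ℕ) :
    gCoup (M + 1) k * Real.sqrt (M.choose (k + 1)) =
      ((M - k : ℕ) : ℝ) * Real.sqrt (M.choose k) := by
  unfold gCoup
  have h : (((M + 1 - 1 - k) * (k + 1) : ℕ) : ℝ) * (M.choose (k + 1) : ℝ)
      = ((M - k : ℕ) : ℝ) ^ 2 * (M.choose k : ℝ) := by
    have := Nat.choose_succ_right_eq M k
    norm_cast
    rw [Nat.add_sub_cancel, mul_assoc, mul_comm (k + 1), this]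
    ring
  rw [← Real.sqrt_mul (Nat.cast_nonneg _), h, Real.sqrt_mul (sq_nonneg _),
    Real.sqrt_sq (Nat.cast_nonneg _)]

theorem gCoup_mul_sqrt_choose (M k : ℕ) :
    gCoup (M + 1) k * Real.sqrt (M.choose k) =
      ((k : ℝ) + 1) * Real.sqrt (M.choose (k + 1)) := by
  unfold gCoup
  have h : (((M + 1 - 1 - k) * (k + 1) : ℕ) : ℝ) * (M.choose k : ℝ)
      = ((k : ℝ) + 1) ^ 2 * (M.choose (k + 1) : ℝ) := by
    have := Nat.choose_succ_right_eq M k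
    norm_cast
    rw [Nat.add_sub_cancel, mul_comm (M - k), mul_assoc, mul_comm (M - k), ← this]
    ring
  rw [← Real.sqrt_mul (Nat.cast_nonneg _), h, Real.sqrt_mul (sq_nonneg _),
    Real.sqrt_sq (by positivity)]

/-- The action of the tridiagonal matrix `H_AO` on a vector extended to all of `ℕ`. In the last row
the superdiagonal term is harmless because `gCoup (M + 1) M = 0`. -/
theorem HAO_sum (M : ℕ) (k : Fin (M + 1)) (v : ℕ → ℂ) :
    ∑ l : Fin (M + 1), HAO (M + 1) k l * v l =
      -((M : ℂ) - 2 * (k : ℕ)) * v k + (gCoup (M + 1) k : ℂ) * v (k + 1)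
        - (if (k : ℕ) = 0 then 0 else (gCoup (M + 1) (k - 1) : ℂ) * v (k - 1)) := by
  obtain ⟨k, hk⟩ := k
  obtain ⟨f, hf⟩ : ∃ f : ℕ → ℂ, ∀ l, f l =
      (if l = k then -((M : ℂ) - 2 * k) * v k else 0)
        + (if l = k + 1 then (gCoup (M + 1) k : ℂ) * v (k + 1) else 0)
        - (if l = k - 1 then
            (if k = 0 then 0 else (gCoup (M + 1) (k - 1) : ℂ) * v (k - 1)) else 0) :=
    ⟨_, fun _ => rfl⟩
  have e : ∀ l : Fin (M + 1), HAO (M + 1) ⟨k, hk⟩ l * v l = f l := by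
    rintro ⟨l, hl⟩
    simp only [HAO, hf]
    rcases lt_trichotomy l k with h | h | h
    · by_cases h' : k = l + 1
      · subst h'
        have h2 : ¬ l = l + 1 + 1 := by omega
        simp [h2]
      · have h1 : ¬ k = l := by omega
        have h2 : ¬ l = k + 1 := by omega
        have h3 : ¬ l = k - 1 := by omega
        simp [h1, h2, h3, h', Ne.symm h1]
    · subst h
      by_cases h0 : l = 0
      · simp [h0]
      · have h3 : ¬ l = l - 1 := by omega
        simp [h3]
    · have h1 : ¬ k = l := by omega
      have h2 : ¬ k = l + 1 := by omega
      have h3 : ¬ l = k - 1 := by omega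
      by_cases h' : l = k + 1
      · subst h'
        have h3 : ¬ k + 1 = k - 1 := by omega
        simp [h3]
      · simp [h1, h2, h3, h', Ne.symm h1]
  rw [Finset.sum_congr rfl fun l _ => e l, Fin.sum_univ_eq_sum_range]
  simp only [hf, Finset.sum_sub_distrib, Finset.sum_add_distrib, Finset.sum_ite_eq', Finset.mem_range]
  have hk1 : k - 1 < M + 1 := by omega
  rw [if_pos hk, if_pos hk1]
  congr 2
  split_ifs with h
  · rfl
  · have hz : M - k = 0 := by omega
    simp [gCoup, hz]

/-- Right multiplication by `J` shifts the columns one step to the right; column `0` becomes zero. -/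
theorem mul_Jmat_apply (M : ℕ) (A : Matrix (Fin (M + 1)) (Fin (M + 1)) ℂ)
    (k q : Fin (M + 1)) :
    (A * Jmat (M + 1)) k q =
      if h : (q : ℕ) = 0 then 0 else A k ⟨q - 1, by omega⟩ := by
  rw [Matrix.mul_apply]
  split_ifs with h
  · apply Finset.sum_eq_zero
    intro l _
    simp [Jmat, h]
  · rw [Finset.sum_eq_single ⟨(q : ℕ) - 1, by omega⟩]
    · have : (q : ℕ) = q - 1 + 1 := by omega
      simp [Jmat, ← this]
    · intro l _ hl
      have : ¬ (q : ℕ) = l + 1 := fun h' => hl (Fin.ext (by simp [h']))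
      simp [Jmat, this]
    · simp

theorem QAO_apply (M : ℕ) (k q : Fin (M + 1)) :
    QAO (M + 1) k q = (Real.sqrt (M.choose k) : ℂ) * ((M - k).choose q : ℂ) *
      ((-1) ^ (M - (q : ℕ)) * ((M - (q : ℕ)).factorial : ℂ)) := by
  simp [QAO, Cmat, Fmat, Pmat, Matrix.mul_diagonal, Matrix.diagonal_mul]

theorem pascal_identity_zero (a m : ℕ) :
    ((m : ℂ) - a) * (a.choose 0 : ℂ) + a * ((a - 1).choose 0 : ℂ)
      - m * ((a + 1).choose 0 : ℂ) = 0 := by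
  simp

theorem pascal_identity_succ (a m q : ℕ) :
    ((m : ℂ) - a) * (a.choose (q + 1) : ℂ) + a * ((a - 1).choose (q + 1) : ℂ)
      - m * ((a + 1).choose (q + 1) : ℂ) = -((a : ℂ) + m - q) * (a.choose q : ℂ) := by
  have h1 : ((a + 1).choose (q + 1) : ℂ) = a.choose q + a.choose (q + 1) := by
    rw [Nat.choose_succ_succ]
    push_cast
    rfl
  have h2 : (a.choose (q + 1) : ℂ) * ((q : ℂ) + 1) = a.choose q * ((a : ℂ) - q) := by
    rcases le_or_gt q a with h | h
    · have := congrArg (Nat.cast : ℕ → ℂ) (Nat.choose_succ_right_eq a q)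
      push_cast [Nat.cast_sub h] at this
      exact this
    · simp [Nat.choose_eq_zero_of_lt h, Nat.choose_eq_zero_of_lt (h.trans q.lt_succ_self)]
  have h3 : (a : ℂ) * ((a - 1).choose (q + 1) : ℂ)
      = a * a.choose (q + 1) - a.choose (q + 1) * ((q : ℂ) + 1) := by
    cases a with
    | zero => simp
    | succ b =>
      have h4 := congrArg (Nat.cast : ℕ → ℂ) (Nat.add_one_mul_choose_eq b q)
      have h5 : ((b + 1).choose (q + 1) : ℂ) = b.choose q + b.choose (q + 1) := by
        rw [Nat.choose_succ_succ]
        push_cast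
        rfl
      push_cast at h4 ⊢
      rw [← h4, h5]
      ring
  rw [h1, h3]
  linear_combination -h2

/-- The square roots cancel: row `k` of `H_AO * C * P`, the product before multiplication by `F`. -/
theorem HAO_mul_CP (M : ℕ) (k : Fin (M + 1)) (q : ℕ) :
    ∑ l : Fin (M + 1), HAO (M + 1) k l *
        ((Real.sqrt (M.choose l) : ℂ) * ((M - l).choose q : ℂ)) =
      (Real.sqrt (M.choose k) : ℂ) *
        ((((k : ℕ) : ℂ) - (M - k : ℕ)) * ((M - k).choose q : ℂ)
          + (M - k : ℕ) * ((M - k - 1).choose q : ℂ)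
          - (k : ℕ) * ((M - k + 1).choose q : ℂ)) := by
  rw [HAO_sum M k (fun l => (Real.sqrt (M.choose l) : ℂ) * ((M - l).choose q : ℂ))]
  obtain ⟨k, hk⟩ := k
  have hkM : k ≤ M := by omega
  have h1 := congrArg (Complex.ofReal) (gCoup_mul_sqrt_choose_succ M k)
  push_cast at h1
  simp only
  rw [← Nat.sub_sub]
  cases k with
  | zero =>
    simp only [if_true]
    push_cast at h1 ⊢
    linear_combination ((M - 0 - 1).choose q : ℂ) * h1
  | succ j =>
    have h2 := congrArg (Complex.ofReal) (gCoup_mul_sqrt_choose M j)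
    push_cast at h2
    have h3 : M - (j + 1) + 1 = M - j := by omega
    rw [if_neg (Nat.succ_ne_zero j), Nat.add_sub_cancel, h3]
    push_cast [Nat.cast_sub hkM] at h1 ⊢
    linear_combination ((M - (j + 1) - 1).choose q : ℂ) * h1 - ((M - j).choose q : ℂ) * h2

/-- `H_AO·Q_AO = Q_AO·J`. -/
theorem ao_intertwining (N : ℕ) (hN : 1 ≤ N) :
    HAO N * QAO N = QAO N * Jmat N := by
  obtain ⟨M, rfl⟩ : ∃ M, N = M + 1 := ⟨N - 1, by omega⟩
  ext k q
  rw [mul_Jmat_apply, Matrix.mul_apply]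
  simp only [QAO_apply]
  simp only [← mul_assoc]
  simp only [← Finset.sum_mul]
  simp only [mul_assoc (HAO _ _ _)]
  rw [HAO_mul_CP]
  obtain ⟨q, hq⟩ := q
  have hkM : (k : ℕ) ≤ M := by omega
  cases q with
  | zero => simp only [pascal_identity_zero]; simp
  | succ p =>
    have hp : M - p = M - (p + 1) + 1 := by omega
    have hc : ((M - (p + 1) : ℕ) : ℂ) = M - (p + 1) := by
      rw [Nat.cast_sub (by omega)]
      push_cast
      rfl
    simp only [pascal_identity_succ, Nat.add_sub_cancel, hp, pow_succ, Nat.factorial_succ]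
    rw [dif_neg (Nat.succ_ne_zero p)]
    push_cast [Nat.cast_sub hkM]
    rw [hc]
    ring
end

section
/- For every integer N ≥ 1, the transition matrix Q_AO is invertible; in fact det Q_AO = ∏_{k=0}^{N−1} ( k! · √(binom(N−1,k)) ), which is positive. -/
/-!
The determinant of `Q_AO = C·P·F` is the product of the three determinants. The Pascal matrix `P`
vanishes strictly below its antidiagonal and is `1` on it, so `det P = ∏_{k<N} (−1)^k` (the sign of
the order-reversing permutation; `det_of_antitriangular`). The diagonal factor `F` contributes the
same sign `∏_{k<N} (−1)^{N−1−k}` times `∏ k!`, and the two signs cancel. Positivity is clear since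
`binom(N−1,k) > 0` for `k < N`, and a matrix with nonzero determinant is a unit.
-/

open Matrix Polynomial Finset

/-- Laplace expansion along the last row, whose only nonzero entry is the leftmost one, removes
the last row and the first column and leaves a matrix of the same shape. -/
lemma det_of_antitriangular (n : ℕ) (M : Matrix (Fin n) (Fin n) ℂ)
    (h0 : ∀ i j : Fin n, n ≤ (i : ℕ) + j → M i j = 0)
    (h1 : ∀ i j : Fin n, (i : ℕ) + j + 1 = n → M i j = 1) :
    M.det = ∏ k ∈ Finset.range n, (-1 : ℂ) ^ k := by
  induction n with
  | zero => simp
  | succ n ih =>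
    rw [Matrix.det_succ_row M (Fin.last n), Finset.prod_range_succ,
      Finset.sum_eq_single (0 : Fin (n + 1))]
    · rw [h1 (Fin.last n) 0 (by simp), ih]
      · simp [mul_comm]
      · intro i j hij
        apply h0
        simp
        omega
      · intro i j hij
        apply h1
        simp
        omega
    · intro j _ hj
      have hj' : (j : ℕ) ≠ 0 := fun h => hj (Fin.ext h)
      rw [h0 (Fin.last n) j (by simp; omega)]
      simp
    · simp

lemma det_Pmat (N : ℕ) : (Pmat N).det = ∏ k ∈ Finset.range N, (-1 : ℂ) ^ k := by
  apply det_of_antitriangular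
  · intro i j hij
    have := j.isLt
    simp only [Pmat, Nat.cast_eq_zero]
    exact Nat.choose_eq_zero_of_lt (by omega)
  · intro i j hij
    have : N - 1 - (i : ℕ) = j := by omega
    simp [Pmat, this]

lemma det_Fmat (N : ℕ) :
    (Fmat N).det = ∏ k ∈ Finset.range N, ((-1 : ℂ) ^ k * (k.factorial : ℂ)) := by
  rw [Fmat, Matrix.det_diagonal,
    Fin.prod_univ_eq_prod_range
      (fun k => (-1 : ℂ) ^ (N - 1 - k) * ((N - 1 - k).factorial : ℂ)) N]
  exact Finset.prod_range_reflect (fun k => (-1 : ℂ) ^ k * (k.factorial : ℂ)) N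

lemma det_QAO (N : ℕ) :
    (QAO N).det =
      ((∏ k ∈ Finset.range N, ((k.factorial : ℝ) * Real.sqrt ((N - 1).choose k)) : ℝ) : ℂ) := by
  rw [QAO, Matrix.det_mul, Matrix.det_mul, det_Pmat, det_Fmat, Cmat, Matrix.det_diagonal,
    Fin.prod_univ_eq_prod_range (fun k => (Real.sqrt ((N - 1).choose k) : ℂ)) N,
    ← Finset.prod_mul_distrib, ← Finset.prod_mul_distrib]
  push_cast
  refine Finset.prod_congr rfl fun k _ => ?_
  have hs : (-1 : ℂ) ^ k * (-1 : ℂ) ^ k = 1 := by rw [← mul_pow]; simp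
  linear_combination ((k.factorial : ℂ) * (Real.sqrt ((N - 1).choose k) : ℂ)) * hs

/-- `Q_AO` is invertible, with explicit positive determinant. -/
theorem qao_det_invertible (N : ℕ) (hN : 1 ≤ N) :
    (QAO N).det =
        ((∏ k ∈ Finset.range N, ((k.factorial : ℝ) * Real.sqrt ((N - 1).choose k)) : ℝ) : ℂ) ∧
      0 < ∏ k ∈ Finset.range N, ((k.factorial : ℝ) * Real.sqrt ((N - 1).choose k)) ∧
      IsUnit (QAO N) := by
  have hpos : 0 < ∏ k ∈ Finset.range N, ((k.factorial : ℝ) * Real.sqrt ((N - 1).choose k)) := by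
    refine Finset.prod_pos fun k hk => ?_
    have hk' : k ≤ N - 1 := by have := Finset.mem_range.mp hk; omega
    have hc : (0 : ℝ) < ((N - 1).choose k : ℝ) := by exact_mod_cast Nat.choose_pos hk'
    have hf : (0 : ℝ) < (k.factorial : ℝ) := by exact_mod_cast k.factorial_pos
    exact mul_pos hf (Real.sqrt_pos.mpr hc)
  refine ⟨det_QAO N, hpos, ?_⟩
  rw [Matrix.isUnit_iff_isUnit_det, isUnit_iff_ne_zero, det_QAO]
  exact_mod_cast hpos.ne'
end

section
/- For every integer N ≥ 1, the matrix identity S·H_BH(1) = H_AO·S holds; equivalently, since S is invertible, H_AO = S·H_BH(1)·S⁻¹, so the explicit upper-triangular matrix S mediates the one-to-one correspondence between the real asymmetric exceptional-point Hamiltonian H_AO and the complex symmetric exceptional-point Hamiltonian H_BH(1). -/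
/-!
Write `M = N - 1` and `c_k = √(binom(M,k))`. The trinomial revision
`binom(M,k) binom(k,n) = binom(M,n) binom(M-n,k-n)` gives
`S_{n,k} = (-β)^{-n} β^k binom(k,n) c_k / c_n`, and the couplings satisfy
`c_k g_k = (k+1) c_{k+1}` and `c_{k+1} g_k = (M-k) c_k`. Each of the at most three terms of the
`(n,k)` entry of `S·H_BH(1)` or of `H_AO·S` is therefore
`(-β)^{-n} β^k c_k / c_n` times an explicit linear combination of `binom(k,n)` and `binom(k+1,n)`. By
`(k+1-n) binom(k+1,n) = (k+1) binom(k,n)`, the equality of the two entries reduces to a polynomial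
identity that follows from `β = -1 + i`. Invertibility of `S` holds because `R` is unitriangular
and `A`, `B` are diagonal with nonzero entries.
-/

open Matrix Polynomial Finset

/-- The normalising weight `c_k = √(binom(M,k))`, as a complex number. -/
noncomputable def weight (M k : ℕ) : ℂ := (Real.sqrt (M.choose k) : ℂ)

/-- The factor `(-β)^{-n} β^k c_k / c_n` shared by all terms of the `(n,k)` entries below. -/
noncomputable def prefactor (M n k : ℕ) : ℂ :=
  ((-betaC) ^ n)⁻¹ * betaC ^ k * (weight M k / weight M n)

/-- The entries of `S` in factored form, for all natural indices and with `M = N - 1`. -/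
noncomputable def sEntry (M n k : ℕ) : ℂ := prefactor M n k * k.choose n

lemma betaC_ne_zero : betaC ≠ 0 := by
  intro h
  have := congrArg Complex.re h
  simp [betaC] at this

lemma betaC_inv : betaC⁻¹ = (-1 - Complex.I) / 2 := by
  apply inv_eq_of_mul_eq_one_right
  unfold betaC
  linear_combination (-1 / 2 : ℂ) * Complex.I_sq

lemma weight_ne_zero {M k : ℕ} (hk : k ≤ M) : weight M k ≠ 0 := by
  have h : (0 : ℝ) < M.choose k := by exact_mod_cast Nat.choose_pos hk
  unfold weight
  exact_mod_cast (Real.sqrt_pos.2 h).ne'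

lemma weight_mul_gCoup (M k : ℕ) :
    weight M k * (gCoup (M + 1) k : ℂ) = (k + 1) * weight M (k + 1) := by
  have h : Real.sqrt (M.choose k) * gCoup (M + 1) k = (k + 1) * Real.sqrt (M.choose (k + 1)) := by
    have e : ((k : ℝ) + 1) = Real.sqrt ((k + 1) ^ 2) := (Real.sqrt_sq (by positivity)).symm
    rw [gCoup, ← Real.sqrt_mul (by positivity), e, ← Real.sqrt_mul (by positivity)]
    congr 1
    have := Nat.choose_succ_right_eq M k
    have h2 : ((M.choose (k + 1) : ℝ)) * (k + 1) = M.choose k * (M - k : ℕ) := by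
      exact_mod_cast this
    simp only [Nat.add_sub_cancel]
    push_cast
    linear_combination (-(k + 1) : ℝ) * h2
  unfold weight
  exact_mod_cast h

lemma weight_succ_mul_gCoup {M k : ℕ} (hk : k ≤ M) :
    weight M (k + 1) * (gCoup (M + 1) k : ℂ) = (M - k) * weight M k := by
  have h : Real.sqrt (M.choose (k + 1)) * gCoup (M + 1) k
      = ((M - k : ℕ) : ℝ) * Real.sqrt (M.choose k) := by
    have e : ((M - k : ℕ) : ℝ) = Real.sqrt ((M - k : ℕ) ^ 2) :=
      (Real.sqrt_sq (by positivity)).symm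
    rw [gCoup, ← Real.sqrt_mul (by positivity), e, ← Real.sqrt_mul (by positivity)]
    congr 1
    have := Nat.choose_succ_right_eq M k
    have h2 : ((M.choose (k + 1) : ℝ)) * (k + 1) = M.choose k * (M - k : ℕ) := by
      exact_mod_cast this
    simp only [Nat.add_sub_cancel]
    push_cast
    linear_combination ((M - k : ℕ) : ℝ) * h2
  unfold weight
  have h3 := congrArg (fun x : ℝ => (x : ℂ)) h
  push_cast [Nat.cast_sub hk] at h3
  exact h3

lemma Smat_apply (M : ℕ) (n k : Fin (M + 1)) : Smat (M + 1) n k = sEntry M n k := by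
  have hn : (n : ℕ) ≤ M := by omega
  have hk : (k : ℕ) ≤ M := by omega
  have hc := weight_ne_zero hn
  have hR : Rmat (M + 1) n k * weight M n = ((k : ℕ).choose n : ℂ) * weight M k := by
    unfold Rmat
    split_ifs with h
    · have e : (((k : ℕ).choose n : ℕ) : ℝ) = Real.sqrt (((k : ℕ).choose n : ℕ) ^ 2) :=
        (Real.sqrt_sq (by positivity)).symm
      have hr : Real.sqrt (((k : ℕ).choose (n : ℕ)) *
          ((M + 1 - 1 - (n : ℕ)).choose ((k : ℕ) - (n : ℕ)))) * Real.sqrt (M.choose n)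
          = (k : ℕ).choose n * Real.sqrt (M.choose k) := by
        rw [← Real.sqrt_mul (by positivity), e, ← Real.sqrt_mul (by positivity)]
        congr 1
        have h1 := Nat.choose_mul (n := M) h
        have h2 : (M.choose k : ℝ) * (k : ℕ).choose n
            = M.choose n * (M - (n : ℕ)).choose ((k : ℕ) - n) := by exact_mod_cast h1
        rw [← e, Nat.add_sub_cancel]
        linear_combination (-((k : ℕ).choose n : ℝ)) * h2
      unfold weight
      exact_mod_cast hr
    · rw [Nat.choose_eq_zero_of_lt (by omega)]
      simp
  rw [sEntry, prefactor, Smat, Amat, Bmat, Matrix.mul_diagonal, Matrix.diagonal_mul,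
    eq_div_iff hc |>.2 hR]
  ring

/-- A sum whose summand is supported on `{k-1, k, k+1}`. -/
lemma sum_three_term {N k : ℕ} (hk : k < N) (F : ℕ → ℂ)
    (hF : ∀ l, l ≠ k → k ≠ l + 1 → l ≠ k + 1 → F l = 0) :
    ∑ l : Fin N, F l
      = F k + (if 0 < k then F (k - 1) else 0) + (if k + 1 < N then F (k + 1) else 0) := by
  rw [Fin.sum_univ_eq_sum_range]
  have hsplit : ∀ l, F l = (if l = k then F l else 0) +
      (if l = k - 1 then (if 0 < k then F l else 0) else 0) +
      (if l = k + 1 then F l else 0) := by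
    intro l
    split_ifs <;> first | omega | (simp; done) | (rw [hF l (by omega) (by omega) (by omega)]; simp)
  rw [Finset.sum_congr rfl fun l _ => hsplit l, Finset.sum_add_distrib, Finset.sum_add_distrib,
    Finset.sum_ite_eq', Finset.sum_ite_eq', Finset.sum_ite_eq']
  simp only [Finset.mem_range, hk, if_true]
  rw [if_pos (by omega : k - 1 < N)]

lemma choose_absorb (k n : ℕ) :
    ((k : ℂ) + 1) * k.choose n = ((k : ℂ) + 1 - n) * (k + 1).choose n := by
  rcases Nat.lt_or_ge (k + 1) n with h | h
  · rw [Nat.choose_eq_zero_of_lt h, Nat.choose_eq_zero_of_lt (by omega)]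
    simp
  · have h1 := congrArg (fun x : ℕ => (x : ℂ)) (Nat.choose_mul_succ_eq k n)
    push_cast [Nat.cast_sub h] at h1
    linear_combination h1

lemma choose_step (k n : ℕ) :
    ((n : ℂ) + 1) * k.choose (n + 1) = ((k : ℂ) - n) * k.choose n := by
  rcases Nat.lt_or_ge k n with h | h
  · rw [Nat.choose_eq_zero_of_lt h, Nat.choose_eq_zero_of_lt (by omega)]
    simp
  · have h1 := congrArg (fun x : ℕ => (x : ℂ)) (Nat.choose_succ_right_eq k n)
    push_cast [Nat.cast_sub h] at h1
    linear_combination h1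

lemma sEntry_pred_right (M n k : ℕ) :
    (if 0 < k then sEntry M n (k - 1) * (gCoup (M + 1) (k - 1) : ℂ) else 0)
      = betaC⁻¹ * (k - n) * k.choose n * prefactor M n k := by
  rcases k with _ | k
  · rcases n with _ | n <;> simp
  · have h := weight_mul_gCoup M k
    have hch := choose_absorb k n
    have e : betaC⁻¹ * betaC = 1 := inv_mul_cancel₀ betaC_ne_zero
    simp only [Nat.succ_pos, if_true, Nat.add_sub_cancel, sEntry, prefactor, pow_succ]
    push_cast
    linear_combination (((-betaC) ^ n)⁻¹ * betaC ^ k * (k.choose n : ℂ) / weight M n) * h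
      + (((-betaC) ^ n)⁻¹ * betaC ^ k * weight M (k + 1) / weight M n) * hch
      - (((-betaC) ^ n)⁻¹ * betaC ^ k * weight M (k + 1) / weight M n) *
        ((k : ℂ) + 1 - n) * (k + 1).choose n * e

lemma sEntry_succ_right {M k : ℕ} (n : ℕ) (hk : k ≤ M) :
    (if k + 1 < M + 1 then sEntry M n (k + 1) * (gCoup (M + 1) k : ℂ) else 0)
      = betaC * (M - k) * (k + 1).choose n * prefactor M n k := by
  split_ifs with hlt
  · have h := weight_succ_mul_gCoup hk
    simp only [sEntry, prefactor, pow_succ]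
    linear_combination
      (((-betaC) ^ n)⁻¹ * betaC ^ k * betaC * ((k + 1).choose n : ℂ) / weight M n) * h
  · obtain rfl : k = M := by omega
    simp

lemma sEntry_succ_left {M n k : ℕ} (hn : n ≤ M) (hk : k ≤ M) :
    (if n + 1 < M + 1 then (gCoup (M + 1) n : ℂ) * sEntry M (n + 1) k else 0)
      = -betaC⁻¹ * (k - n) * k.choose n * prefactor M n k := by
  split_ifs with hlt
  · have h := weight_mul_gCoup M n
    have h1 := weight_ne_zero hn
    have h2 : weight M (n + 1) ≠ 0 := weight_ne_zero (by omega)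
    have h3 : (gCoup (M + 1) n : ℂ) / weight M (n + 1) = (n + 1) / weight M n := by
      rw [div_eq_div_iff h2 h1]
      linear_combination h
    have hch := choose_step k n
    simp only [sEntry, prefactor, pow_succ, mul_inv, inv_neg]
    linear_combination
      (-((-betaC) ^ n)⁻¹ * betaC⁻¹ * betaC ^ k * (k.choose (n + 1) : ℂ) * weight M k) * h3
      - (((-betaC) ^ n)⁻¹ * betaC⁻¹ * betaC ^ k * weight M k / weight M n) * hch
  · obtain rfl : n = M := by omega
    -- Here `k ≤ n`, so either `k - n` or `binom(k,n)` vanishes.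
    rcases hk.lt_or_eq with h | rfl
    · simp [Nat.choose_eq_zero_of_lt h]
    · simp

lemma sEntry_pred_left {M n k : ℕ} (hn : n ≤ M) :
    (if 0 < n then -(gCoup (M + 1) (n - 1) : ℂ) * sEntry M (n - 1) k else 0)
      = betaC * (M - n + 1) * ((k + 1).choose n - k.choose n) * prefactor M n k := by
  rcases n with _ | n
  · simp
  · have h := weight_succ_mul_gCoup (show n ≤ M by omega)
    have h1 := weight_ne_zero hn
    have h2 : weight M n ≠ 0 := weight_ne_zero (by omega)
    have h3 : (gCoup (M + 1) n : ℂ) / weight M n = (M - n) / weight M (n + 1) := by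
      rw [div_eq_div_iff h2 h1]
      linear_combination h
    have e : betaC⁻¹ * betaC = 1 := inv_mul_cancel₀ betaC_ne_zero
    simp only [Nat.succ_pos, if_true, Nat.add_sub_cancel, sEntry, prefactor, pow_succ, mul_inv,
      inv_neg, Nat.choose_succ_succ' k n]
    push_cast
    linear_combination
      (-((-betaC) ^ n)⁻¹ * betaC ^ k * (k.choose n : ℂ) * weight M k) * h3
      + ((-betaC) ^ n)⁻¹ * betaC ^ k * (k.choose n : ℂ) * weight M k *
        ((M - n) / weight M (n + 1)) * e

lemma Smat_mul_HBH_apply (M : ℕ) (n k : Fin (M + 1)) :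
    (Smat (M + 1) * HBH (M + 1) 1) n k
      = (-Complex.I * (M - 2 * (k : ℕ)) * (k : ℕ).choose n
          + betaC⁻¹ * ((k : ℕ) - (n : ℕ)) * (k : ℕ).choose n
          + betaC * (M - (k : ℕ)) * ((k : ℕ) + 1).choose n) * prefactor M n k := by
  have hsum := sum_three_term k.isLt (fun l => sEntry M n l *
    (if l = (k : ℕ) then -Complex.I * ((((M + 1 : ℕ) : ℤ) - 1 - 2 * (l : ℕ) : ℤ) : ℂ) * 1
    else if (k : ℕ) = l + 1 then (gCoup (M + 1) l : ℂ)
    else if l = (k : ℕ) + 1 then (gCoup (M + 1) k : ℂ)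
    else 0)) (by intro l h1 h2 h3; simp [h1, h2, h3])
  rw [Matrix.mul_apply]
  simp only [Smat_apply, HBH]
  rw [hsum, add_mul, add_mul, ← sEntry_pred_right M n k,
    ← sEntry_succ_right (n : ℕ) (show (k : ℕ) ≤ M by omega)]
  congr 1
  · congr 1
    · simp [sEntry]
      ring
    · by_cases h : 0 < (k : ℕ)
      · have h1 : (k : ℕ) - 1 ≠ k := by omega
        have h2 : (k : ℕ) = k - 1 + 1 := by omega
        simp only [if_pos h, if_neg h1, if_pos h2]
      · simp only [if_neg h]
  · have h1 : (k : ℕ) ≠ k + 1 + 1 := by omega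
    simp [h1]

lemma HAO_mul_Smat_apply (M : ℕ) (n k : Fin (M + 1)) :
    (HAO (M + 1) * Smat (M + 1)) n k
      = (-(M - 2 * (n : ℕ)) * (k : ℕ).choose n
          + betaC * (M - (n : ℕ) + 1) * (((k : ℕ) + 1).choose n - (k : ℕ).choose n)
          + -betaC⁻¹ * ((k : ℕ) - (n : ℕ)) * (k : ℕ).choose n) * prefactor M n k := by
  have hsum := sum_three_term n.isLt (fun l =>
    (if (n : ℕ) = l then -((((M + 1 : ℕ) : ℤ) - 1 - 2 * (n : ℕ) : ℤ) : ℂ)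
    else if l = (n : ℕ) + 1 then (gCoup (M + 1) n : ℂ)
    else if (n : ℕ) = l + 1 then -(gCoup (M + 1) l : ℂ)
    else 0) * sEntry M l k) (by intro l h1 h2 h3; simp [Ne.symm h1, h2, h3])
  rw [Matrix.mul_apply]
  simp only [Smat_apply, HAO]
  rw [hsum, add_mul, add_mul, ← sEntry_pred_left (show (n : ℕ) ≤ M by omega),
    ← sEntry_succ_left (show (n : ℕ) ≤ M by omega) (show (k : ℕ) ≤ M by omega)]
  congr 1
  · congr 1
    · simp [sEntry]
      ring
    · by_cases h : 0 < (n : ℕ)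
      · have h1 : (n : ℕ) ≠ n - 1 := by omega
        have h2 : (n : ℕ) = n - 1 + 1 := by omega
        have h3 : (n : ℕ) - 1 ≠ n + 1 := by omega
        simp only [if_pos h, if_neg h1, if_pos h2, if_neg h3]
      · simp only [if_neg h]
  · simp

lemma isUnit_det_Smat (N : ℕ) : IsUnit (Smat N).det := by
  have hR : (Rmat N).det = 1 := by
    rw [Matrix.det_of_isUpperTriangular]
    · simp [Rmat]
    · intro i j hij
      have : ¬ ((i : ℕ) ≤ (j : ℕ)) := by
        simpa using hij
      simp only [Rmat, if_neg this]
  rw [isUnit_iff_ne_zero, Smat, Matrix.det_mul, Matrix.det_mul, hR, Bmat, Amat,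
    Matrix.det_diagonal, Matrix.det_diagonal]
  have hb := betaC_ne_zero
  simp [Finset.prod_ne_zero_iff, hb]

/-- `S·H_BH(1) = H_AO·S`, equivalently `H_AO = S·H_BH(1)·S⁻¹`. -/
theorem direct_correspondence (N : ℕ) (hN : 1 ≤ N) :
    Smat N * HBH N 1 = HAO N * Smat N ∧
      HAO N = Smat N * HBH N 1 * (Smat N)⁻¹ := by
  obtain ⟨M, rfl⟩ : ∃ M, N = M + 1 := ⟨N - 1, by omega⟩
  have key : Smat (M + 1) * HBH (M + 1) 1 = HAO (M + 1) * Smat (M + 1) := by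
    ext n k
    rw [Smat_mul_HBH_apply, HAO_mul_Smat_apply, betaC_inv]
    congr 1
    have h := choose_absorb (k : ℕ) (n : ℕ)
    unfold betaC
    linear_combination (Complex.I - 1) * h
  refine ⟨key, ?_⟩
  rw [key, Matrix.mul_nonsing_inv_cancel_right _ _ (isUnit_det_Smat _)]
end
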